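/- Let k ≥ 2 be an integer, α = (1+√(1+4/k))/2, β = kα+1, a_n = ⌊nα⌋, b_n = ⌊nβ⌋, d_n = b_n − b_{n−1}. Fix i ∈ {1,…,k−1} and suppose n ≥ 1 satisfies d_n = k+2 and #{j : 1 ≤ j ≤ n, d_j = k+2} ≡ i (mod k) (i.e., the P-position (a_n,b_n) has index i). Let m ≥ 1 be such that g^i_m ≤ b_n < g^i_{m+1}. Then n ≥ g^i_{m−1}, and a_n − f^i_m = a_{n − g^i_{m−1}} and b_n − g^i_m = b_{n − g^i_{m−1}}. (Hence from the position (a_n, b_n − 1) the Type III move (f^i_m, g^i_m − 1) leads to the P-position (a_{n − g^i_{m−1}}, b_{n − g^i_{m−1}}).) -/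

import Mathlib

/-- α = (1 + √(1 + 4/k)) / 2 -/
noncomputable def alphaK (k : ℕ) : ℝ := (1 + Real.sqrt (1 + 4 / (k : ℝ))) / 2

/-- β = k·α + 1 -/
noncomputable def betaK (k : ℕ) : ℝ := (k : ℝ) * alphaK k + 1

/-- a_n = ⌊n·α⌋ -/
noncomputable def aSeq (k n : ℕ) : ℤ := ⌊(n : ℝ) * alphaK k⌋

/-- b_n = ⌊n·β⌋ -/
noncomputable def bSeq (k n : ℕ) : ℤ := ⌊(n : ℝ) * betaK k⌋

/-- c_n = a_n − a_{n−1} (used for n ≥ 1) -/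
noncomputable def cSeq (k n : ℕ) : ℤ := aSeq k n - aSeq k (n - 1)

/-- d_n = b_n − b_{n−1} (used for n ≥ 1) -/
noncomputable def dSeq (k n : ℕ) : ℤ := bSeq k n - bSeq k (n - 1)

/-- the pair (f^i_n, g^i_n): (f^i_0,g^i_0) = (0,i+1),
    (f^i_n, g^i_n) = (f^i_{n−1} + g^i_{n−1}, k·f^i_{n−1} + (k+1)·g^i_{n−1} + i). -/
def fg (k i : ℕ) : ℕ → ℕ × ℕ
  | 0 => (0, i + 1)
  | n + 1 => ((fg k i n).1 + (fg k i n).2,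
      k * (fg k i n).1 + (k + 1) * (fg k i n).2 + i)

/-!
Put `θ = k(α − 1)`, so that `β = k + 1 + θ`, `b_n = (k + 1)n + ⌊nθ⌋` and `a_n = n + ⌊⌊nθ⌋ / k⌋`.
The number of `j ≤ n` with `d_j = k + 2` is then `⌊nθ⌋`, so the congruence on this number says that
`⌊nθ⌋ = kq + i` for some `q`, that is, that the error `E(q, n) = nθ − kq − i` lies in `[0, 1)`.
Since `θ² + kθ = k`, one step of the recurrence defining `(f, g)` multiplies `E` by `1 − θ`. Hence
`E(f_m, g_m)` also lies in `[0, 1)`, and running the recurrence backwards shows that `(f_m, g_m)` is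
a best approximation: no pair `(q, n)` with `0 < n < g_{m+1}` has its error in `[0, E(f_m, g_m))`.
As `b_n` is the second coordinate of the successor of `(q, n)` under the recurrence, the bounds on
`b_n` say that `g_{m-1} ≤ n < g_m`, so `E(f_{m-1}, g_{m-1}) ≤ E(q, n)`. The difference of these
errors lies in `[0, 1)`, which determines `a` and `b` at `n − g_{m-1}`.
-/

section Floor

variable {R : Type*} [Ring R] [LinearOrder R] [IsStrictOrderedRing R] [FloorRing R] {θ : R}

theorem floor_succ_mul_eq_or (h0 : 0 ≤ θ) (h1 : θ < 1) (n : ℕ) :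
    ⌊((n + 1 : ℕ) : R) * θ⌋ = ⌊(n : R) * θ⌋ ∨ ⌊((n + 1 : ℕ) : R) * θ⌋ = ⌊(n : R) * θ⌋ + 1 := by
  have hmul : ((n + 1 : ℕ) : R) * θ = n * θ + θ := by push_cast; rw [add_mul, one_mul]
  have lower : ⌊(n : R) * θ⌋ ≤ ⌊((n + 1 : ℕ) : R) * θ⌋ :=
    Int.floor_le_floor (by rw [hmul]; exact le_add_of_nonneg_right h0)
  have upper : ⌊((n + 1 : ℕ) : R) * θ⌋ ≤ ⌊(n : R) * θ⌋ + 1 := by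
    rw [← Int.floor_add_one, hmul]
    exact Int.floor_le_floor (by gcongr)
  omega

theorem card_filter_floor_mul_sub_eq_one (h0 : 0 ≤ θ) (h1 : θ < 1) (n : ℕ) :
    (((Finset.Icc 1 n).filter
      (fun j : ℕ => ⌊(j : R) * θ⌋ - ⌊((j - 1 : ℕ) : R) * θ⌋ = 1)).card : ℤ) = ⌊(n : R) * θ⌋ := by
  induction n with
  | zero => simp
  | succ n ih =>
    rw [← Finset.insert_Icc_right_eq_Icc_add_one (by omega), Finset.filter_insert,
      Nat.add_sub_cancel]
    rcases floor_succ_mul_eq_or h0 h1 n with hfloor | hfloor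
    · rw [if_neg (by omega), ih, hfloor]
    · rw [if_pos (by omega), Finset.card_insert_of_notMem (by simp), Nat.cast_succ, ih, hfloor]

end Floor

/-- `θ = k(α − 1)`, the fractional part of `β` for `k ≥ 1`. -/
noncomputable def thetaK (k : ℕ) : ℝ := k * (alphaK k - 1)

section Theta

variable {k : ℕ}

theorem one_lt_alphaK (hk : 0 < k) : 1 < alphaK k := by
  have hsqrt : 1 < √(1 + 4 / (k : ℝ)) := by
    rw [Real.lt_sqrt zero_le_one, one_pow, lt_add_iff_pos_right]
    positivity
  unfold alphaK
  linarith

theorem thetaK_mul_alphaK (hk : 0 < k) : thetaK k * alphaK k = 1 := by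
  have hsq : √(1 + 4 / (k : ℝ)) ^ 2 = 1 + 4 / k := Real.sq_sqrt (by positivity)
  have hcancel : (k : ℝ) * (4 / k) = 4 := by field_simp
  unfold thetaK alphaK
  linear_combination (k : ℝ) / 4 * hsq + hcancel / 4

theorem thetaK_pos (hk : 0 < k) : 0 < thetaK k :=
  mul_pos (Nat.cast_pos.mpr hk) (sub_pos.mpr (one_lt_alphaK hk))

theorem thetaK_lt_one (hk : 0 < k) : thetaK k < 1 :=
  calc
    thetaK k < thetaK k * alphaK k := lt_mul_of_one_lt_right (thetaK_pos hk) (one_lt_alphaK hk)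
    _ = 1 := thetaK_mul_alphaK hk

theorem thetaK_sq_add_mul (hk : 0 < k) : thetaK k ^ 2 + k * thetaK k = k := by
  have hθ : thetaK k + k = k * alphaK k := by unfold thetaK; ring
  linear_combination thetaK k * hθ + k * thetaK_mul_alphaK hk

theorem bSeq_eq_add_floor (k n : ℕ) : bSeq k n = (k + 1) * n + ⌊(n : ℝ) * thetaK k⌋ := by
  have hmul : (n : ℝ) * betaK k = (((k + 1) * n : ℤ) : ℝ) + n * thetaK k := by
    unfold betaK thetaK
    push_cast
    ring
  rw [bSeq, hmul, Int.floor_intCast_add]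

theorem aSeq_eq_add_floor_div (hk : 0 < k) (n : ℕ) :
    aSeq k n = n + ⌊(n : ℝ) * thetaK k⌋ / k := by
  have hmul : (n : ℝ) * alphaK k = n + n * thetaK k / k := by
    unfold thetaK
    field_simp
    ring
  rw [aSeq, hmul, Int.floor_natCast_add, Int.floor_div_natCast]

theorem dSeq_succ_eq_iff (k j : ℕ) :
    dSeq k (j + 1) = k + 2 ↔
      ⌊((j + 1 : ℕ) : ℝ) * thetaK k⌋ - ⌊(j : ℝ) * thetaK k⌋ = 1 := by
  have hd : dSeq k (j + 1) =
      k + 1 + (⌊((j + 1 : ℕ) : ℝ) * thetaK k⌋ - ⌊(j : ℝ) * thetaK k⌋) := by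
    rw [dSeq, Nat.add_sub_cancel, bSeq_eq_add_floor, bSeq_eq_add_floor]
    push_cast
    ring
  omega

theorem card_filter_dSeq_eq_floor (hk : 0 < k) (n : ℕ) :
    (((Finset.Icc 1 n).filter (fun j => dSeq k j = (k : ℤ) + 2)).card : ℤ) =
      ⌊(n : ℝ) * thetaK k⌋ := by
  rw [← card_filter_floor_mul_sub_eq_one (thetaK_pos hk).le (thetaK_lt_one hk)]
  congr 2
  refine Finset.filter_congr fun j hj => ?_
  obtain ⟨j, rfl⟩ := Nat.exists_eq_add_of_le' (Finset.mem_Icc.mp hj).1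
  exact dSeq_succ_eq_iff k j

end Theta

/-- The error `E(q, n) = nθ − kq − i`, which lies in `[0, 1)` exactly when `⌊nθ⌋ = kq + i`. The
arguments range over `ℤ` because the recurrence for `(f, g)` is also run backwards. -/
noncomputable def fgError (k i : ℕ) (q n : ℤ) : ℝ := n * thetaK k - k * q - i

section Error

variable {k i : ℕ} {q q' n n' : ℤ}

theorem fgError_mem_Ico_iff {n : ℕ} :
    fgError k i q n ∈ Set.Ico (0 : ℝ) 1 ↔ ⌊(n : ℝ) * thetaK k⌋ = k * q + i := by
  rw [Int.floor_eq_iff, fgError, Set.mem_Ico]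
  push_cast
  constructor <;> rintro ⟨lower, upper⟩ <;> constructor <;> linarith

theorem aSeq_eq_of_fgError_mem_Ico (hik : i < k) {n : ℕ}
    (h : fgError k i q n ∈ Set.Ico (0 : ℝ) 1) : aSeq k n = n + q := by
  have hk : 0 < k := by omega
  have hdiv : (k * q + i : ℤ) / k = q := by
    rw [Int.mul_add_ediv_left _ _ (by omega), Int.ediv_eq_zero_of_lt (by omega) (by omega),
      add_zero]
  rw [aSeq_eq_add_floor_div hk, fgError_mem_Ico_iff.mp h, hdiv]

theorem bSeq_eq_of_fgError_mem_Ico {n : ℕ} (h : fgError k i q n ∈ Set.Ico (0 : ℝ) 1) :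
    bSeq k n = k * q + (k + 1) * n + i := by
  rw [bSeq_eq_add_floor, fgError_mem_Ico_iff.mp h]
  ring

theorem exists_fgError_mem_Ico_of_modEq (hk : 0 < k) {n : ℕ}
    (h : ((Finset.Icc 1 n).filter (fun j => dSeq k j = (k : ℤ) + 2)).card ≡ i [MOD k]) :
    ∃ q : ℤ, fgError k i q n ∈ Set.Ico (0 : ℝ) 1 := by
  obtain ⟨q, hq⟩ := Nat.modEq_iff_dvd.mp h.symm
  rw [card_filter_dSeq_eq_floor hk] at hq
  exact ⟨q, fgError_mem_Ico_iff.mpr (by omega)⟩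

theorem fgError_sub_fgError (k i : ℕ) (q q' n n' : ℤ) :
    fgError k i q n - fgError k i q' n' = fgError k 0 (q - q') (n - n') := by
  unfold fgError
  push_cast
  ring

theorem fgError_step (hk : 0 < k) (i : ℕ) (q n : ℤ) :
    fgError k i (q + n) (k * q + (k + 1) * n + i) = (1 - thetaK k) * fgError k i q n := by
  unfold fgError
  push_cast
  linear_combination (n : ℝ) * thetaK_sq_add_mul hk

theorem fst_le_fst_of_fgError_mem_Ico (hk : 0 < k) (h : fgError k i q n ∈ Set.Ico (0 : ℝ) 1)
    (h' : fgError k i q' n' ∈ Set.Ico (0 : ℝ) 1) (hn : n ≤ n') : q ≤ q' := by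
  have hmul : (n : ℝ) * thetaK k ≤ n' * thetaK k := by
    have := thetaK_pos hk
    gcongr
  have hlt : (k : ℝ) * q < k * q' + 1 := by
    unfold fgError at h h'
    linarith [h.1, h'.2]
  have hle : (k : ℤ) * q ≤ k * q' := Int.lt_add_one_iff.mp (mod_cast hlt)
  exact le_of_mul_le_mul_left hle (mod_cast hk)

theorem step_snd_le_iff_of_fgError_mem_Ico (hk : 0 < k)
    (h : fgError k i q n ∈ Set.Ico (0 : ℝ) 1) (h' : fgError k i q' n' ∈ Set.Ico (0 : ℝ) 1) :
    k * q + (k + 1) * n + i ≤ k * q' + (k + 1) * n' + i ↔ n ≤ n' := by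
  constructor
  · intro hstep
    by_contra! hn
    have hq : q' ≤ q := fst_le_fst_of_fgError_mem_Ico hk h' h hn.le
    have : (k : ℤ) * q' + (k + 1) * n' < k * q + (k + 1) * n :=
      add_lt_add_of_le_of_lt (by gcongr) (by gcongr)
    omega
  · intro hn
    have hq : q ≤ q' := fst_le_fst_of_fgError_mem_Ico hk h h' hn
    gcongr

end Error

section BestApproximation

variable {k i : ℕ}

theorem fg_snd_pos (k i m : ℕ) : 0 < (fg k i m).2 := by
  induction m with
  | zero => exact Nat.succ_pos i
  | succ m ih => simp only [fg]; positivity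

theorem fgError_fg (hk : 0 < k) (i m : ℕ) :
    fgError k i (fg k i m).1 (fg k i m).2 = (1 - thetaK k) ^ (m + 1) * (k + thetaK k - i) := by
  induction m with
  | zero =>
    simp only [fg, fgError]
    push_cast
    linear_combination thetaK_sq_add_mul hk
  | succ m ih =>
    rw [pow_succ', mul_assoc, ← ih, ← fgError_step hk]
    simp only [fg]
    push_cast
    rfl

theorem fgError_fg_mem_Ico (hik : i < k) (m : ℕ) :
    fgError k i (fg k i m).1 (fg k i m).2 ∈ Set.Ico (0 : ℝ) 1 := by
  have hk : 0 < k := by omega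
  have hθ := thetaK_pos hk
  have hθ' : 0 < 1 - thetaK k := sub_pos.mpr (thetaK_lt_one hk)
  have hi : (0 : ℝ) ≤ k + thetaK k - i := by
    have : (i : ℝ) < k := mod_cast hik
    linarith
  rw [fgError_fg hk]
  refine ⟨by positivity, ?_⟩
  calc
    (1 - thetaK k) ^ (m + 1) * (k + thetaK k - i) ≤ (1 - thetaK k) * (k + thetaK k - i) := by
      gcongr
      exact pow_le_of_le_one hθ'.le (by linarith) m.succ_ne_zero
    _ = thetaK k - i * (1 - thetaK k) := by linear_combination -thetaK_sq_add_mul hk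
    _ ≤ thetaK k := sub_le_self _ (by positivity)
    _ < 1 := thetaK_lt_one hk

-- `k + θ − i` is the error of `(-1, 1)`, the pair that precedes `(f_0, g_0)` under the recurrence.
theorem fg_zero_le_of_fgError_lt (hk : 0 < k) {q n : ℤ} (hn : 0 < n) (h0 : 0 ≤ fgError k i q n)
    (h : fgError k i q n < k + thetaK k - i) : 0 ≤ q ∧ i + 1 ≤ n := by
  have hk' : (0 : ℝ) < k := mod_cast hk
  have hn1 : (1 : ℝ) ≤ n := mod_cast hn
  unfold fgError at h0 h
  have hq : 0 ≤ q := by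
    have hθ : thetaK k ≤ n * thetaK k := le_mul_of_one_le_left (thetaK_pos hk).le hn1
    have hmul : (k : ℝ) * (-1) < k * q := by linarith
    have hlt : (-1 : ℝ) < q := lt_of_mul_lt_mul_left hmul hk'.le
    exact Int.add_one_le_iff.mpr (mod_cast hlt : (-1 : ℤ) < q)
  have hq' : (0 : ℝ) ≤ k * q := mul_nonneg hk'.le (mod_cast hq)
  have hi : (i : ℝ) < n :=
    calc
      (i : ℝ) ≤ n * thetaK k := by linarith
      _ < n := mul_lt_of_lt_one_right (by linarith) (thetaK_lt_one hk)
  exact ⟨hq, mod_cast hi⟩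

theorem fg_le_of_fgError_lt (hk : 0 < k) (m : ℕ) {q n : ℤ} (hn : 0 < n)
    (h0 : 0 ≤ fgError k i q n)
    (h : fgError k i q n < (1 - thetaK k) ^ m * (k + thetaK k - i)) :
    (fg k i m).1 ≤ q ∧ (fg k i m).2 ≤ n := by
  have hθ : 0 < 1 - thetaK k := sub_pos.mpr (thetaK_lt_one hk)
  induction m generalizing q n with
  | zero =>
    rw [pow_zero, one_mul] at h
    exact_mod_cast fg_zero_le_of_fgError_lt hk hn h0 h
  | succ m ih =>
    obtain ⟨q', n', rfl, hn_eq⟩ : ∃ q' n' : ℤ, q = q' + n' ∧ n = k * q' + (k + 1) * n' + i :=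
      ⟨q - (n - k * q - i), n - k * q - i, by ring, by ring⟩
    have hn' : 0 < n' := by
      have heq : (n' : ℝ) = fgError k i (q' + n') n + (1 - thetaK k) * n := by
        rw [fgError, hn_eq]
        push_cast
        ring
      have hpos : (0 : ℝ) < n' := by rw [heq]; positivity
      exact_mod_cast hpos
    subst hn_eq
    rw [fgError_step hk] at h0 h
    rw [pow_succ', mul_assoc] at h
    obtain ⟨hf, hg⟩ := ih hn' (nonneg_of_mul_nonneg_right h0 hθ) (lt_of_mul_lt_mul_left h hθ.le)
    simp only [fg]
    push_cast
    exact ⟨by gcongr, by gcongr⟩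

theorem fgError_fg_le_of_lt_fg_succ (hk : 0 < k) {m : ℕ} {q n : ℤ} (hn : 0 < n)
    (hlt : n < (fg k i (m + 1)).2) (h0 : 0 ≤ fgError k i q n) :
    fgError k i (fg k i m).1 (fg k i m).2 ≤ fgError k i q n := by
  by_contra! h
  rw [fgError_fg hk] at h
  exact hlt.not_ge (fg_le_of_fgError_lt hk (m + 1) hn h0 h).2

theorem fg_succ_le_bSeq_iff (hik : i < k) {m n : ℕ} {q : ℤ}
    (h : fgError k i q n ∈ Set.Ico (0 : ℝ) 1) :
    (fg k i (m + 1)).2 ≤ bSeq k n ↔ (fg k i m).2 ≤ n := by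
  have hiff := step_snd_le_iff_of_fgError_mem_Ico (by omega) (fgError_fg_mem_Ico hik m) h
  rw [bSeq_eq_of_fgError_mem_Ico h, ← Int.ofNat_le, ← hiff]
  simp only [fg]
  push_cast
  rfl

end BestApproximation

theorem typeIII_winning_move_general {k i n m : ℕ} (hik : i < k)
    (hmod : ((Finset.Icc 1 n).filter (fun j => dSeq k j = (k : ℤ) + 2)).card ≡ i [MOD k])
    (h1 : ((fg k i (m + 1)).2 : ℤ) ≤ bSeq k n) (h2 : bSeq k n < ((fg k i (m + 2)).2 : ℤ)) :
    (fg k i m).2 ≤ n ∧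
    aSeq k n - ((fg k i (m + 1)).1 : ℤ) = aSeq k (n - (fg k i m).2) ∧
    bSeq k n - ((fg k i (m + 1)).2 : ℤ) = bSeq k (n - (fg k i m).2) := by
  have hk : 0 < k := by omega
  obtain ⟨q, hq⟩ := exists_fgError_mem_Ico_of_modEq hk hmod
  have hle : (fg k i m).2 ≤ n := (fg_succ_le_bSeq_iff hik hq).mp h1
  have hlt : n < (fg k i (m + 1)).2 :=
    lt_of_not_ge fun h => h2.not_ge ((fg_succ_le_bSeq_iff hik hq).mpr h)
  have hn : 0 < n := (fg_snd_pos k i m).trans_le hle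
  have hbest : fgError k i (fg k i m).1 (fg k i m).2 ≤ fgError k i q n :=
    fgError_fg_le_of_lt_fg_succ hk (mod_cast hn) (mod_cast hlt) hq.1
  have hsub : fgError k 0 (q - (fg k i m).1) (n - (fg k i m).2 : ℕ) ∈ Set.Ico (0 : ℝ) 1 := by
    rw [Nat.cast_sub hle, ← fgError_sub_fgError k i]
    exact ⟨sub_nonneg.mpr hbest, by linarith [hq.2, (fgError_fg_mem_Ico hik m).1]⟩
  rw [aSeq_eq_of_fgError_mem_Ico hik hq, aSeq_eq_of_fgError_mem_Ico hk hsub,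
    bSeq_eq_of_fgError_mem_Ico hq, bSeq_eq_of_fgError_mem_Ico hsub, Nat.cast_sub hle]
  refine ⟨hle, ?_, ?_⟩ <;> simp only [fg] <;> push_cast <;> ring

/-- From a position (a_n, b_n − 1) where the P-position (a_n, b_n) has index i,
    the maximal applicable Type III move for i leads to a P-position:
    if g^i_m ≤ b_n < g^i_{m+1} then n ≥ g^i_{m−1} and
    (a_n − f^i_m, b_n − g^i_m) = (a_{n − g^i_{m−1}}, b_{n − g^i_{m−1}}). -/
theorem typeIII_winning_move (k : ℕ) (hk : 2 ≤ k) (i : ℕ) (hi1 : 1 ≤ i)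
    (hik : i ≤ k - 1) (n : ℕ) (hn : 1 ≤ n) (hd : dSeq k n = (k : ℤ) + 2)
    (hmod : ((Finset.Icc 1 n).filter
        (fun j => dSeq k j = (k : ℤ) + 2)).card ≡ i [MOD k])
    (m : ℕ) (hm : 1 ≤ m)
    (h1 : ((fg k i m).2 : ℤ) ≤ bSeq k n)
    (h2 : bSeq k n < ((fg k i (m + 1)).2 : ℤ)) :
    (fg k i (m - 1)).2 ≤ n ∧
    aSeq k n - ((fg k i m).1 : ℤ) = aSeq k (n - (fg k i (m - 1)).2) ∧
    bSeq k n - ((fg k i m).2 : ℤ) = bSeq k (n - (fg k i (m - 1)).2) := by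
  obtain ⟨m, rfl⟩ := Nat.exists_eq_add_of_le' hm
  exact typeIII_winning_move_general (by omega) hmod h1 h2
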